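/- Let X be a Polish metric space and {P_n} Borel probability measures on X. Suppose that for every δ > 0 there exist sets K_n ⊂ X with P_n(K_n) ≥ 1 − δ for every n, such that every sequence {x_n} with x_n ∈ K_n for all n has a convergent subsequence (along any subsequence of indices). Then {P_n} admits a subsequence converging weakly to a Borel probability measure P on X. -/

import Mathlib

open MeasureTheory Filter Topology

/-- In a metric space, a set all of whose sequences have convergent subsequences
has compact closure. -/
lemma isCompact_closure_of_subseq {X : Type*} [MetricSpace X] {s : Set X}
    (hs : ∀ v : ℕ → X, (∀ n, v n ∈ s) →
      ∃ φ : ℕ → ℕ, StrictMono φ ∧ ∃ l : X, Tendsto (v ∘ φ) atTop (nhds l)) :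
    IsCompact (closure s) := by
  apply IsSeqCompact.isCompact
  intro u hu
  have hex : ∀ n : ℕ, ∃ w ∈ s, dist (u n) w < 1 / ((n : ℝ) + 1) := fun n =>
    Metric.mem_closure_iff.1 (hu n) _ Nat.one_div_pos_of_nat
  choose v hv hd using hex
  obtain ⟨φ, hφ, l, hl⟩ := hs v hv
  refine ⟨l, mem_closure_of_tendsto hl (Eventually.of_forall fun n => hv _), φ, hφ, ?_⟩
  have h0 : Tendsto (fun n => dist (v n) (u n)) atTop (nhds 0) := by
    refine squeeze_zero (fun n => dist_nonneg) (fun n => ?_)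
      (tendsto_one_div_add_atTop_nhds_zero_nat (𝕜 := ℝ))
    rw [dist_comm]
    exact (hd n).le
  exact (tendsto_iff_of_dist (h0.comp hφ.tendsto_atTop)).1 hl

/-- The union of the sets `K n ∩ C n` is relatively compact. -/
lemma isCompact_closure_iUnion_inter {X : Type*} [MetricSpace X] {K C : ℕ → Set X}
    (hne : ∀ n, (K n).Nonempty) (hC : ∀ n, IsCompact (C n))
    (hK : ∀ x : ℕ → X, (∀ n, x n ∈ K n) →
        ∀ φ : ℕ → ℕ, StrictMono φ →
          ∃ ψ : ℕ → ℕ, StrictMono ψ ∧ ∃ l : X,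
            Tendsto (x ∘ φ ∘ ψ) atTop (nhds l)) :
    IsCompact (closure (⋃ n, K n ∩ C n)) := by
  apply isCompact_closure_of_subseq
  intro y hy
  simp only [Set.mem_iUnion] at hy
  choose m hm using hy
  by_cases hfr : ∃ N, ∃ᶠ k in atTop, m k = N
  · obtain ⟨N, hN⟩ := hfr
    obtain ⟨a, -, φ, hφ, ha⟩ := (hC N).tendsto_subseq' (x := y)
      (hN.mono fun k hk => hk ▸ (hm k).2)
    exact ⟨φ, hφ, a, ha⟩
  · have hev : ∀ N, ∀ᶠ k in atTop, m k ≠ N := by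
      intro N
      by_contra hcon
      exact hfr ⟨N, by simpa [Filter.Frequently] using hcon⟩
    have htop : Tendsto m atTop atTop := by
      rw [tendsto_atTop]
      intro b
      have := (Set.finite_Iio b).eventually_all (l := atTop) (p := fun N k => m k ≠ N)
      have h2 := this.2 fun N _ => hev N
      filter_upwards [h2] with k hk
      by_contra hlt
      exact hk (m k) (not_le.1 hlt) rfl
    obtain ⟨φ, hφ, hmφ⟩ := strictMono_subseq_of_tendsto_atTop htop
    choose d hd using hne
    let x : ℕ → X := Function.extend (m ∘ φ) (y ∘ φ) d
    have hxe : ∀ k, x ((m ∘ φ) k) = y (φ k) := fun k => hmφ.injective.extend_apply _ _ k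
    have hx : ∀ n, x n ∈ K n := by
      intro n
      by_cases hn : ∃ k, (m ∘ φ) k = n
      · obtain ⟨k, rfl⟩ := hn
        rw [hxe]
        exact (hm (φ k)).1
      · have : x n = d n := Function.extend_apply' _ _ _ hn
        rw [this]
        exact hd n
    obtain ⟨ψ, hψ, l, hl⟩ := hK x hx (m ∘ φ) hmφ
    refine ⟨φ ∘ ψ, hφ.comp hψ, l, ?_⟩
    refine hl.congr fun k => ?_
    exact hxe (ψ k)

/-- A tightness-type criterion on a Polish space: if for every `δ > 0` there are
sets `K_n` with `P_n(K_n) ≥ 1 − δ` such that every sequence of points `x_n ∈ K_n`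
has a convergent subsequence (along any subsequence of indices), then `{P_n}`
admits a weakly convergent subsequence. -/
theorem tightness_criterion_polish
    (X : Type*) [MetricSpace X] [TopologicalSpace.SeparableSpace X] [CompleteSpace X]
    [MeasurableSpace X] [BorelSpace X]
    (P : ℕ → Measure X) [∀ n, IsProbabilityMeasure (P n)]
    (h : ∀ δ : ℝ, 0 < δ → ∃ K : ℕ → Set X,
      (∀ n, ENNReal.ofReal (1 - δ) ≤ P n (K n)) ∧
      (∀ x : ℕ → X, (∀ n, x n ∈ K n) →
        ∀ φ : ℕ → ℕ, StrictMono φ →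
          ∃ ψ : ℕ → ℕ, StrictMono ψ ∧ ∃ l : X,
            Tendsto (x ∘ φ ∘ ψ) atTop (nhds l))) :
    ∃ φ : ℕ → ℕ, StrictMono φ ∧ ∃ Q : Measure X, IsProbabilityMeasure Q ∧
      ∀ f : BoundedContinuousFunction X ℝ,
        Tendsto (fun n => ∫ x, f x ∂(P (φ n))) atTop
          (nhds (∫ x, f x ∂Q)) := by
  have htight : ∀ ε : ENNReal, 0 < ε → ∃ D : Set X, IsCompact D ∧ ∀ n, P n Dᶜ ≤ ε := by
    intro ε hε
    obtain ⟨δ, hδ0, hδ⟩ : ∃ δ : NNReal, 0 < δ ∧ (δ : ENNReal) < min (ε / 2) 1 := by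
      obtain ⟨δ, h1, h2⟩ := ENNReal.lt_iff_exists_nnreal_btwn.1
        (lt_min (ENNReal.half_pos hε.ne') one_pos)
      exact ⟨δ, by exact_mod_cast h1, h2⟩
    have hδ1 : (δ : ENNReal) < 1 := hδ.trans_le (min_le_right _ _)
    have hδε : (δ : ENNReal) + δ ≤ ε := by
      have := (hδ.trans_le (min_le_left _ _)).le
      calc (δ : ENNReal) + δ ≤ ε / 2 + ε / 2 := add_le_add this this
        _ = ε := ENNReal.add_halves ε
    obtain ⟨K, hKm, hK⟩ := h δ (by exact_mod_cast hδ0)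
    have hKm' : ∀ n, 1 ≤ P n (K n) + δ := by
      intro n
      have := hKm n
      rw [ENNReal.ofReal_sub _ δ.coe_nonneg, ENNReal.ofReal_one, ENNReal.ofReal_coe_nnreal] at this
      exact tsub_le_iff_right.1 this
    have hne : ∀ n, (K n).Nonempty := by
      intro n
      by_contra hn
      have := hKm' n
      rw [Set.not_nonempty_iff_eq_empty.1 hn, measure_empty, zero_add] at this
      exact absurd hδ1 (not_lt.2 this)
    have hCex : ∀ n, ∃ C : Set X, IsCompact C ∧ P n Cᶜ ≤ δ := by
      intro n
      have hs : SecondCountableTopology X := UniformSpace.secondCountable_of_separable X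
      obtain ⟨C, hC, hC'⟩ := isTightMeasureSet_iff_exists_isCompact_measure_compl_le.1
        (isTightMeasureSet_singleton (μ := P n)) δ (by exact_mod_cast hδ0)
      exact ⟨C, hC, hC' _ rfl⟩
    choose C hC hCm using hCex
    refine ⟨_, isCompact_closure_iUnion_inter hne hC hK, fun n => ?_⟩
    set D := closure (⋃ n, K n ∩ C n) with hD
    have hsub : K n ⊆ D ∪ (C n)ᶜ := by
      intro z hz
      by_cases hzC : z ∈ C n
      · exact Or.inl (subset_closure (Set.mem_iUnion.2 ⟨n, hz, hzC⟩))
      · exact Or.inr hzC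
    have h1 : P n (K n) ≤ P n D + δ :=
      (measure_mono hsub).trans ((measure_union_le _ _).trans (by gcongr; exact hCm n))
    rw [prob_compl_eq_one_sub isClosed_closure.measurableSet, tsub_le_iff_right]
    calc (1 : ENNReal) ≤ P n (K n) + δ := hKm' n
      _ ≤ P n D + δ + δ := by gcongr
      _ = (δ + δ) + P n D := by ring
      _ ≤ ε + P n D := by gcongr
  let p : ℕ → ProbabilityMeasure X := fun n => ⟨P n, inferInstance⟩
  have hcomp : IsCompact (closure (Set.range p)) := by
    apply isCompact_closure_of_isTightMeasureSet
    rw [isTightMeasureSet_iff_exists_isCompact_measure_compl_le]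
    intro ε hε
    obtain ⟨D, hD, hDm⟩ := htight ε hε
    refine ⟨D, hD, ?_⟩
    rintro _ ⟨_, ⟨n, rfl⟩, rfl⟩
    exact hDm n
  obtain ⟨Q, -, φ, hφ, hQ⟩ := hcomp.tendsto_subseq (x := p)
    (fun n => subset_closure (Set.mem_range_self n))
  exact ⟨φ, hφ, Q, inferInstance,
    fun f => ProbabilityMeasure.tendsto_iff_forall_integral_tendsto.1 hQ f⟩
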